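/- arXiv:2405.05577 — 3 statements merged into one kernel-verified Lean document; each statement's English description precedes it below -/
import Mathlib

section
/- Let n ≥ 1 and 0 < α, s < 1. If φ is a Schwartz function on ℝⁿ×ℝ, then there exists a constant C > 0 such that for all (x,t) ∈ ℝⁿ×ℝ, |D_right^α φ(x,t) + (-Δ)^s φ(x,t)| ≤ C / ((1+|x|^{n+2s})(1+|t|^{1+α})). -/
open MeasureTheory Set

/-- The normalization constant `C_α = 1/|Γ(-α)|` for the Marchaud fractional derivative. -/
noncomputable def Calpha (α : ℝ) : ℝ := 1 / |Real.Gamma (-α)|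

/-- The normalization constant `C_{n,s} = 4^s Γ(n/2+s)/(π^{n/2}|Γ(-s)|)` for the
fractional Laplacian. -/
noncomputable def Cns (n : ℕ) (s : ℝ) : ℝ :=
  (4 : ℝ) ^ s * Real.Gamma ((n : ℝ) / 2 + s) / (Real.pi ^ ((n : ℝ) / 2) * |Real.Gamma (-s)|)

/-- The right Marchaud fractional derivative of order `α` in the time variable:
`D_right^α φ(x,t) = C_α ∫_t^∞ (φ(x,t) - φ(x,τ))/(τ-t)^{1+α} dτ`. -/
noncomputable def marchaudRight {n : ℕ} (α : ℝ) (φ : EuclideanSpace ℝ (Fin n) × ℝ → ℝ)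
    (x : EuclideanSpace ℝ (Fin n)) (t : ℝ) : ℝ :=
  Calpha α * ∫ τ in Ioi t, (φ (x, t) - φ (x, τ)) / (τ - t) ^ (1 + α)

/-- The fractional Laplacian `(-Δ)^s` acting in the space variable:
`(-Δ)^s φ(x,t) = (C_{n,s}/2) ∫_{ℝⁿ} (2φ(x,t) - φ(x+y,t) - φ(x-y,t))/|y|^{n+2s} dy`. -/
noncomputable def fracLap {n : ℕ} (s : ℝ) (φ : EuclideanSpace ℝ (Fin n) × ℝ → ℝ)
    (x : EuclideanSpace ℝ (Fin n)) (t : ℝ) : ℝ :=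
  Cns n s / 2 * ∫ y : EuclideanSpace ℝ (Fin n),
    (2 * φ (x, t) - φ (x + y, t) - φ (x - y, t)) / ‖y‖ ^ ((n : ℝ) + 2 * s)

/-!
Both operators integrate a finite difference of `φ` against `‖h‖ ^ (-p)`, with `p = 1 + α` on `ℝ`
and `p = n + 2 * s` on `ℝⁿ`, while the other variable is a parameter carrying its own decay. Let
`w x = (1 + ‖x‖) ^ (-p)`. For `‖h‖ ≤ 1` Taylor's formula gains the power of `‖h‖` that makes the
singularity integrable, and `w` is comparable at points at distance at most `1`. For `‖h‖ > 1`,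
dividing `(1 + ‖x‖) ^ p ≤ 2 ^ (p - 1) * ((1 + ‖x + h‖) ^ p + ‖h‖ ^ p)` by the three powers gives
`w (x + h) * ‖h‖ ^ (-p) ≤ 2 ^ (p - 1) * w x * (‖h‖ ^ (-p) + w (x + h))`, and both terms in the last
factor are integrable over `‖h‖ > 1` because `p` exceeds the dimension.
-/

open Module

section Weight

variable {E : Type*} [SeminormedAddCommGroup E] {p : ℝ}

lemma one_add_norm_rpow_neg_le_of_norm_sub_le_one (hp : 0 ≤ p) {x y : E} (hxy : ‖x - y‖ ≤ 1) :
    (1 + ‖y‖) ^ (-p) ≤ 2 ^ p * (1 + ‖x‖) ^ (-p) := by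
  have hle : (1 + ‖x‖) / 2 ≤ 1 + ‖y‖ := by linarith [norm_sub_norm_le x y, norm_nonneg y]
  calc (1 + ‖y‖) ^ (-p) ≤ ((1 + ‖x‖) / 2) ^ (-p) :=
        Real.rpow_le_rpow_of_nonpos (by positivity) hle (by linarith)
    _ = 2 ^ p * (1 + ‖x‖) ^ (-p) := by
        rw [Real.div_rpow (by positivity) zero_le_two, Real.rpow_neg zero_le_two, div_inv_eq_mul,
          mul_comm]

lemma one_add_norm_rpow_neg_div_norm_sub_rpow_le (hp : 1 ≤ p) {x y : E} (hxy : 0 < ‖x - y‖) :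
    (1 + ‖y‖) ^ (-p) / ‖x - y‖ ^ p ≤
      2 ^ (p - 1) * (1 + ‖x‖) ^ (-p) * (1 / ‖x - y‖ ^ p + (1 + ‖y‖) ^ (-p)) := by
  have hconv : (1 + ‖x‖) ^ p ≤ 2 ^ (p - 1) * ((1 + ‖y‖) ^ p + ‖x - y‖ ^ p) :=
    calc (1 + ‖x‖) ^ p ≤ ((1 + ‖y‖) + ‖x - y‖) ^ p := by
          gcongr ?_ ^ p
          linarith [norm_sub_norm_le x y]
      _ ≤ 2 ^ (p - 1) * ((1 + ‖y‖) ^ p + ‖x - y‖ ^ p) :=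
          mod_cast NNReal.rpow_add_le_mul_rpow_add_rpow (1 + ‖y‖₊) ‖x - y‖₊ hp
  simp only [Real.rpow_neg (show (0 : ℝ) ≤ 1 + ‖x‖ by positivity),
    Real.rpow_neg (show (0 : ℝ) ≤ 1 + ‖y‖ by positivity)]
  calc ((1 + ‖y‖) ^ p)⁻¹ / ‖x - y‖ ^ p
      = (1 + ‖x‖) ^ p * (((1 + ‖x‖) ^ p)⁻¹ * ((1 + ‖y‖) ^ p)⁻¹ * (‖x - y‖ ^ p)⁻¹) := by
        field_simp
    _ ≤ 2 ^ (p - 1) * ((1 + ‖y‖) ^ p + ‖x - y‖ ^ p) *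
          (((1 + ‖x‖) ^ p)⁻¹ * ((1 + ‖y‖) ^ p)⁻¹ * (‖x - y‖ ^ p)⁻¹) := by gcongr
    _ = 2 ^ (p - 1) * ((1 + ‖x‖) ^ p)⁻¹ * (1 / ‖x - y‖ ^ p + ((1 + ‖y‖) ^ p)⁻¹) := by
        field_simp

lemma one_add_rpow_neg_le_two_div_one_add_rpow {r : ℝ} (hr : 0 ≤ r) (hp : 0 ≤ p) :
    (1 + r) ^ (-p) ≤ 2 / (1 + r ^ p) := by
  rw [Real.rpow_neg (by positivity), ← one_div, div_le_div_iff₀ (by positivity) (by positivity)]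
  have hone : 1 ≤ (1 + r) ^ p := Real.one_le_rpow (by linarith) hp
  have hle : r ^ p ≤ (1 + r) ^ p := Real.rpow_le_rpow hr (by linarith) hp
  linarith

lemma abs_div_norm_rpow_le {k : ℕ} {B D : ℝ} (hp : 1 ≤ p) (hB : 0 ≤ B) {x h : E}
    (hnear : ‖h‖ ≤ 1 → |D| ≤ B * (1 + ‖x‖) ^ (-p) * ‖h‖ ^ k)
    (hglobal : |D| ≤ B * ((1 + ‖x‖) ^ (-p) + (1 + ‖x + h‖) ^ (-p) + (1 + ‖x - h‖) ^ (-p))) :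
    |D / ‖h‖ ^ p| ≤ B * (1 + ‖x‖) ^ (-p) *
      ((1 + 2 ^ p) * (min 1 (‖h‖ ^ k) / ‖h‖ ^ p) +
        2 ^ (p - 1) * ((1 + ‖x + h‖) ^ (-p) + (1 + ‖x - h‖) ^ (-p))) := by
  rw [abs_div, abs_of_nonneg (by positivity : 0 ≤ ‖h‖ ^ p)]
  rcases le_or_gt ‖h‖ 1 with hle | hlt
  · rw [min_eq_right (pow_le_one₀ (norm_nonneg h) hle)]
    calc |D| / ‖h‖ ^ p ≤ B * (1 + ‖x‖) ^ (-p) * ‖h‖ ^ k / ‖h‖ ^ p := by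
          gcongr
          exact hnear hle
      _ = B * (1 + ‖x‖) ^ (-p) * (1 * (‖h‖ ^ k / ‖h‖ ^ p) + 0) := by ring
      _ ≤ _ := by
          gcongr
          · exact le_add_of_nonneg_right (by positivity)
          · positivity
  · have hpos : 0 < ‖h‖ := one_pos.trans hlt
    have hadd := one_add_norm_rpow_neg_div_norm_sub_rpow_le hp (x := x) (y := x + h) (by simpa)
    have hsub := one_add_norm_rpow_neg_div_norm_sub_rpow_le hp (x := x) (y := x - h) (by simpa)
    rw [sub_add_cancel_left, norm_neg] at hadd
    rw [sub_sub_cancel] at hsub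
    rw [min_eq_left (one_le_pow₀ hlt.le)]
    calc |D| / ‖h‖ ^ p
        ≤ B * ((1 + ‖x‖) ^ (-p) + (1 + ‖x + h‖) ^ (-p) + (1 + ‖x - h‖) ^ (-p)) / ‖h‖ ^ p := by
          gcongr
      _ = B * ((1 + ‖x‖) ^ (-p) * (1 / ‖h‖ ^ p) + (1 + ‖x + h‖) ^ (-p) / ‖h‖ ^ p +
            (1 + ‖x - h‖) ^ (-p) / ‖h‖ ^ p) := by ring
      _ ≤ _ := mul_le_mul_of_nonneg_left (add_le_add (add_le_add_right hadd _) hsub) hB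
      _ = _ := by
          rw [Real.rpow_sub_one two_ne_zero]
          ring

end Weight

section SingularIntegral

variable {E : Type*} [NormedAddCommGroup E] [NormedSpace ℝ E] [FiniteDimensional ℝ E]
  [Nontrivial E] [MeasurableSpace E] [BorelSpace E] (μ : Measure E) [μ.IsAddHaarMeasure]
  {p : ℝ} {k : ℕ}

lemma integrable_min_one_norm_pow_div_norm_rpow (hp : finrank ℝ E < p)
    (hpk : p < finrank ℝ E + k) :
    Integrable (fun h : E => min 1 (‖h‖ ^ k) / ‖h‖ ^ p) μ := by
  have hjacobian (r : ℝ) :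
      r ^ (finrank ℝ E - 1) = r ^ ((finrank ℝ E : ℝ) - 1) := by
    rw [← Real.rpow_natCast, Nat.cast_sub finrank_pos, Nat.cast_one]
  rw [integrable_fun_norm_addHaar μ (f := fun r : ℝ => min 1 (r ^ k) / r ^ p),
    ← Ioc_union_Ioi_eq_Ioi zero_le_one]
  refine IntegrableOn.union ?_ ?_
  · refine ((intervalIntegral.intervalIntegrable_rpow'
      (r := (finrank ℝ E : ℝ) - 1 + k - p) (by linarith)).1).congr_fun ?_ measurableSet_Ioc
    rintro r ⟨hr0, hr1⟩
    simp only [smul_eq_mul]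
    rw [min_eq_right (pow_le_one₀ hr0.le hr1), hjacobian r, Real.rpow_sub hr0,
      Real.rpow_add hr0, Real.rpow_natCast, mul_div_assoc]
  · refine (integrableOn_Ioi_rpow_of_lt (a := (finrank ℝ E : ℝ) - 1 - p) (by linarith)
      zero_lt_one).congr_fun ?_ measurableSet_Ioi
    intro r (hr : 1 < r)
    have hr0 : 0 < r := one_pos.trans hr
    simp only [smul_eq_mul]
    rw [min_eq_left (one_le_pow₀ hr.le), hjacobian r, Real.rpow_sub hr0, mul_one_div]

lemma exists_abs_integral_div_norm_rpow_le (hp : finrank ℝ E < p) (hpk : p < finrank ℝ E + k) :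
    ∃ K, 0 ≤ K ∧ ∀ {x : E} {B : ℝ} {D : E → ℝ},
      (∀ h, ‖h‖ ≤ 1 → |D h| ≤ B * (1 + ‖x‖) ^ (-p) * ‖h‖ ^ k) →
      (∀ h, |D h| ≤ B * ((1 + ‖x‖) ^ (-p) + (1 + ‖x + h‖) ^ (-p) + (1 + ‖x - h‖) ^ (-p))) →
      |∫ h, D h / ‖h‖ ^ p ∂μ| ≤ K * B * (1 + ‖x‖) ^ (-p) := by
  have hone : 1 ≤ p := (Nat.one_le_cast.2 finrank_pos).trans hp.le
  have hw : Integrable (fun y : E => (1 + ‖y‖) ^ (-p)) μ := integrable_one_add_norm hp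
  refine ⟨(1 + 2 ^ p) * (∫ h : E, min 1 (‖h‖ ^ k) / ‖h‖ ^ p ∂μ) +
    2 ^ (p - 1) * (2 * ∫ y : E, (1 + ‖y‖) ^ (-p) ∂μ), by positivity,
    fun {x B D} hnear hglobal => ?_⟩
  have hB : 0 ≤ B := nonneg_of_mul_nonneg_left ((abs_nonneg _).trans (hglobal 0)) (by positivity)
  have hkernel := (integrable_min_one_norm_pow_div_norm_rpow μ hp hpk).const_mul (1 + 2 ^ p)
  have hadd : Integrable (fun h : E => (1 + ‖x + h‖) ^ (-p)) μ := hw.comp_add_left x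
  have hsub : Integrable (fun h : E => (1 + ‖x - h‖) ^ (-p)) μ := hw.comp_sub_left x
  have htranslates : Integrable (fun h : E =>
      2 ^ (p - 1) * ((1 + ‖x + h‖) ^ (-p) + (1 + ‖x - h‖) ^ (-p))) μ :=
    (hadd.add hsub).const_mul _
  have hmajorant : Integrable (fun h : E => (1 + 2 ^ p) * (min 1 (‖h‖ ^ k) / ‖h‖ ^ p) +
      2 ^ (p - 1) * ((1 + ‖x + h‖) ^ (-p) + (1 + ‖x - h‖) ^ (-p))) μ :=
    hkernel.add htranslates
  rw [← Real.norm_eq_abs]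
  calc ‖∫ h, D h / ‖h‖ ^ p ∂μ‖
      ≤ ∫ h, B * (1 + ‖x‖) ^ (-p) * ((1 + 2 ^ p) * (min 1 (‖h‖ ^ k) / ‖h‖ ^ p) +
          2 ^ (p - 1) * ((1 + ‖x + h‖) ^ (-p) + (1 + ‖x - h‖) ^ (-p))) ∂μ :=
        norm_integral_le_of_norm_le (hmajorant.const_mul _)
          (.of_forall fun h => abs_div_norm_rpow_le hone hB (hnear h) (hglobal h))
    _ = _ := by
        rw [integral_const_mul, integral_add hkernel htranslates, integral_const_mul,
          integral_const_mul, integral_add hadd hsub,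
          integral_add_left_eq_self (fun y : E => (1 + ‖y‖) ^ (-p)) x,
          integral_sub_left_eq_self (fun y : E => (1 + ‖y‖) ^ (-p)) μ x]
        ring

end SingularIntegral

section FiniteDifference

lemma exists_abs_integral_Ioi_sub_div_rpow_le {p : ℝ} (hp1 : 1 < p) (hp2 : p < 2) :
    ∃ K, 0 ≤ K ∧ ∀ {f : ℝ → ℝ} {A : ℝ}, Differentiable ℝ f →
      (∀ t, |f t| ≤ A * (1 + |t|) ^ (-p)) → (∀ t, |deriv f t| ≤ A * (1 + |t|) ^ (-p)) →
      ∀ t, |∫ τ in Ioi t, (f t - f τ) / (τ - t) ^ p| ≤ K * A * (1 + |t|) ^ (-p) := by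
  obtain ⟨K, hK, hint⟩ := exists_abs_integral_div_norm_rpow_le (volume : Measure ℝ) (p := p)
    (k := 1) (by simpa using hp1) (by norm_num; exact hp2)
  refine ⟨K * 2 ^ p, by positivity, fun {f A} hf hf₀ hf₁ t => ?_⟩
  have hA : 0 ≤ A := nonneg_of_mul_nonneg_left ((abs_nonneg _).trans (hf₀ 0)) (by positivity)
  set D : ℝ → ℝ := (Ioi 0).indicator fun h => f t - f (t + h) with hD
  have hD_le (h : ℝ) : |D h| ≤ |f t - f (t + h)| :=
    norm_indicator_le_norm_self (fun h => f t - f (t + h)) h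
  have hshift : ∫ τ in Ioi t, (f t - f τ) / (τ - t) ^ p = ∫ h, D h / ‖h‖ ^ p := by
    rw [← integral_indicator measurableSet_Ioi, ← integral_add_left_eq_self _ t]
    congr 1 with h
    by_cases hh : 0 < h
    · simp [hD, indicator, hh, abs_of_pos hh]
    · simp [hD, indicator, hh]
  rw [hshift, mul_assoc K]
  refine hint (fun h hh => (hD_le h).trans ?_) fun h => (hD_le h).trans ?_
  · have hderiv (y : ℝ) (hy : y ∈ Metric.closedBall t 1) :
        ‖deriv f y‖ ≤ 2 ^ p * A * (1 + ‖t‖) ^ (-p) := by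
      rw [mem_closedBall_iff_norm'] at hy
      calc ‖deriv f y‖ ≤ A * (1 + ‖y‖) ^ (-p) := hf₁ y
        _ ≤ A * (2 ^ p * (1 + ‖t‖) ^ (-p)) := by
            gcongr
            exact one_add_norm_rpow_neg_le_of_norm_sub_le_one (by linarith) hy
        _ = 2 ^ p * A * (1 + ‖t‖) ^ (-p) := by ring
    simpa using (convex_closedBall t 1).norm_image_sub_le_of_norm_deriv_le
      (fun y _ => hf y) hderiv (x := t + h) (y := t) (by simpa using hh) (by simp)
  · calc |f t - f (t + h)| ≤ |f t| + |f (t + h)| := abs_sub _ _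
      _ ≤ A * (1 + ‖t‖) ^ (-p) + A * (1 + ‖t + h‖) ^ (-p) := add_le_add (hf₀ t) (hf₀ (t + h))
      _ = 1 * A * ((1 + ‖t‖) ^ (-p) + (1 + ‖t + h‖) ^ (-p) + 0) := by ring
      _ ≤ _ := by
          gcongr
          · exact Real.one_le_rpow one_le_two (by linarith)
          · positivity

variable {E : Type*} [NormedAddCommGroup E] [NormedSpace ℝ E]

lemma norm_second_difference_le {F : Type*} [NormedAddCommGroup F] [NormedSpace ℝ F] {f : E → F}
    (hf : ContDiff ℝ 2 f) {S : Set E} (hS : Convex ℝ S) {B : ℝ}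
    (hB : ∀ z ∈ S, ‖iteratedFDeriv ℝ 2 f z‖ ≤ B) {x y : E} (hadd : x + y ∈ S)
    (hsub : x - y ∈ S) :
    ‖(2 : ℝ) • f x - f (x + y) - f (x - y)‖ ≤ B * ‖y‖ ^ 2 := by
  have hx : x ∈ S := by
    convert hS.midpoint_mem hadd hsub using 1
    simp
  have hf₁ : Differentiable ℝ f := hf.differentiable two_ne_zero
  have hf₂ : Differentiable ℝ (fderiv ℝ f) :=
    (hf.fderiv_right (m := 1) (by norm_num)).differentiable one_ne_zero
  -- The second difference is the increment from `x` to `x - y` of the first difference `g`.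
  set g : E → F := fun z => f (z + y) - f z
  have hg (z : E) : HasFDerivAt g (fderiv ℝ f (z + y) - fderiv ℝ f z) z :=
    ((hasFDerivAt_comp_add_right y).2 (hf₁ (z + y)).hasFDerivAt).sub (hf₁ z).hasFDerivAt
  have hg_le (z : E) (hz : z ∈ S ∩ (fun z => z + y) ⁻¹' S) :
      ‖fderiv ℝ f (z + y) - fderiv ℝ f z‖ ≤ B * ‖y‖ := by
    simpa using hS.norm_image_sub_le_of_norm_fderiv_le (fun w _ => hf₂ w)
      (fun w hw => (norm_iteratedFDeriv_one (fderiv ℝ f)).symm.trans_le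
        (norm_iteratedFDeriv_fderiv.trans_le (hB w hw))) hz.1 hz.2
  have hconvex : Convex ℝ (S ∩ (fun z => z + y) ⁻¹' S) := hS.inter (hS.translate_preimage_left y)
  have hmean : ‖g (x - y) - g x‖ ≤ B * ‖y‖ * ‖x - y - x‖ :=
    hconvex.norm_image_sub_le_of_norm_hasFDerivWithin_le
      (fun z _ => (hg z).hasFDerivWithinAt) hg_le ⟨hx, hadd⟩ ⟨hsub, by simpa using hx⟩
  calc ‖(2 : ℝ) • f x - f (x + y) - f (x - y)‖ = ‖g (x - y) - g x‖ := by
        simp only [g, sub_add_cancel, two_smul]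
        congr 1
        abel
    _ ≤ B * ‖y‖ * ‖x - y - x‖ := hmean
    _ = B * ‖y‖ ^ 2 := by
        rw [sub_sub_cancel_left, norm_neg]
        ring

lemma exists_abs_integral_second_difference_div_norm_rpow_le [FiniteDimensional ℝ E] [Nontrivial E]
    [MeasurableSpace E] [BorelSpace E] (μ : Measure E) [μ.IsAddHaarMeasure] {p : ℝ}
    (hp : finrank ℝ E < p) (hp2 : p < finrank ℝ E + 2) :
    ∃ K, 0 ≤ K ∧ ∀ {f : E → ℝ} {A : ℝ}, ContDiff ℝ 2 f →
      (∀ x, |f x| ≤ A * (1 + ‖x‖) ^ (-p)) →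
      (∀ x, ‖iteratedFDeriv ℝ 2 f x‖ ≤ A * (1 + ‖x‖) ^ (-p)) →
      ∀ x, |∫ y, (2 * f x - f (x + y) - f (x - y)) / ‖y‖ ^ p ∂μ| ≤
        K * A * (1 + ‖x‖) ^ (-p) := by
  obtain ⟨K, hK, hint⟩ := exists_abs_integral_div_norm_rpow_le μ (k := 2) hp (by simpa using hp2)
  refine ⟨K * 2 ^ p, by positivity, fun {f A} hf hf₀ hf₂ x => ?_⟩
  have hone : 1 ≤ p := (Nat.one_le_cast.2 finrank_pos).trans hp.le
  have hA : 0 ≤ A := nonneg_of_mul_nonneg_left ((abs_nonneg _).trans (hf₀ 0)) (by positivity)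
  rw [mul_assoc K]
  refine hint (fun y hy => ?_) fun y => ?_
  · have hhess (z : E) (hz : z ∈ Metric.closedBall x 1) :
        ‖iteratedFDeriv ℝ 2 f z‖ ≤ 2 ^ p * A * (1 + ‖x‖) ^ (-p) := by
      rw [mem_closedBall_iff_norm'] at hz
      calc ‖iteratedFDeriv ℝ 2 f z‖ ≤ A * (1 + ‖z‖) ^ (-p) := hf₂ z
        _ ≤ A * (2 ^ p * (1 + ‖x‖) ^ (-p)) := by
            gcongr
            exact one_add_norm_rpow_neg_le_of_norm_sub_le_one (by linarith) hz
        _ = 2 ^ p * A * (1 + ‖x‖) ^ (-p) := by ring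
    exact norm_second_difference_le hf (convex_closedBall x 1) hhess (by simpa using hy)
      (by simpa using hy)
  · have h2p : (2 : ℝ) ≤ 2 ^ p := Real.self_le_rpow_of_one_le one_le_two hone
    calc |2 * f x - f (x + y) - f (x - y)| ≤ 2 * |f x| + |f (x + y)| + |f (x - y)| := by
          grw [abs_sub, abs_sub, abs_mul, abs_two]
      _ ≤ 2 * (A * (1 + ‖x‖) ^ (-p)) + 2 * (A * (1 + ‖x + y‖) ^ (-p)) +
            2 * (A * (1 + ‖x - y‖) ^ (-p)) := by
          linarith [hf₀ x, hf₀ (x + y), hf₀ (x - y), abs_nonneg (f (x + y)),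
            abs_nonneg (f (x - y))]
      _ = 2 * A * ((1 + ‖x‖) ^ (-p) + (1 + ‖x + y‖) ^ (-p) + (1 + ‖x - y‖) ^ (-p)) := by ring
      _ ≤ _ := by gcongr

end FiniteDifference

section Slice

variable {E F G : Type*} [NormedAddCommGroup E] [NormedSpace ℝ E] [NormedAddCommGroup F]
  [NormedSpace ℝ F] [NormedAddCommGroup G] [NormedSpace ℝ G]

lemma norm_iteratedFDeriv_comp_add_le {f : F → G} {k : ℕ} (hf : ContDiff ℝ k f) {L : E →L[ℝ] F}
    (hL : ‖L‖ ≤ 1) (c : F) (x : E) :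
    ‖iteratedFDeriv ℝ k (fun y => f (L y + c)) x‖ ≤ ‖iteratedFDeriv ℝ k f (L x + c)‖ := by
  have hfc : ContDiff ℝ k fun z => f (z + c) := hf.comp (contDiff_id.add contDiff_const)
  calc ‖iteratedFDeriv ℝ k ((fun z => f (z + c)) ∘ L) x‖
      = ‖(iteratedFDeriv ℝ k f (L x + c)).compContinuousLinearMap fun _ => L‖ := by
        rw [L.iteratedFDeriv_comp_right hfc x le_rfl, iteratedFDeriv_comp_add_right]
    _ ≤ ‖iteratedFDeriv ℝ k f (L x + c)‖ * ∏ _i : Fin k, ‖L‖ :=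
        ContinuousMultilinearMap.norm_compContinuousLinearMap_le _ _
    _ ≤ ‖iteratedFDeriv ℝ k f (L x + c)‖ :=
        mul_le_of_le_one_right (norm_nonneg _)
          (Finset.prod_le_one (fun _ _ => norm_nonneg L) fun _ _ => hL)

lemma norm_iteratedFDeriv_comp_prodMk_left_le {f : E × F → G} {k : ℕ} (hf : ContDiff ℝ k f) (x : E)
    (t : F) : ‖iteratedFDeriv ℝ k (fun y => f (y, t)) x‖ ≤ ‖iteratedFDeriv ℝ k f (x, t)‖ := by
  simpa using norm_iteratedFDeriv_comp_add_le hf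
    (ContinuousLinearMap.norm_inl_le_one ℝ E F) ((0, t) : E × F) x

lemma norm_iteratedFDeriv_comp_prodMk_right_le {f : E × F → G} {k : ℕ} (hf : ContDiff ℝ k f) (x : E)
    (t : F) : ‖iteratedFDeriv ℝ k (fun r => f (x, r)) t‖ ≤ ‖iteratedFDeriv ℝ k f (x, t)‖ := by
  simpa using norm_iteratedFDeriv_comp_add_le hf
    (ContinuousLinearMap.norm_inr_le_one ℝ E F) ((x, 0) : E × F) t

lemma exists_norm_iteratedFDeriv_schwartzMap_prod_le (f : SchwartzMap (E × F) G) (k : ℕ)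
    (p q : ℝ) :
    ∃ C, ∀ j ≤ k, ∀ x t, ‖iteratedFDeriv ℝ j f (x, t)‖ ≤
      C * ((1 + ‖x‖) ^ (-p) * (1 + ‖t‖) ^ (-q)) := by
  set m : ℕ × ℕ := (⌈p⌉₊ + ⌈q⌉₊, k)
  refine ⟨2 ^ m.1 * (Finset.Iic m).sup (fun m => SchwartzMap.seminorm ℝ m.1 m.2) f,
    fun j hj x t => ?_⟩
  have hx : (1 + ‖x‖) ^ p ≤ (1 + ‖(x, t)‖) ^ ⌈p⌉₊ :=
    calc (1 + ‖x‖) ^ p ≤ (1 + ‖x‖) ^ (⌈p⌉₊ : ℝ) :=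
          Real.rpow_le_rpow_of_exponent_le (by simp) (Nat.le_ceil p)
      _ = (1 + ‖x‖) ^ ⌈p⌉₊ := Real.rpow_natCast _ _
      _ ≤ (1 + ‖(x, t)‖) ^ ⌈p⌉₊ := by
          gcongr
          exact norm_fst_le (x, t)
  have ht : (1 + ‖t‖) ^ q ≤ (1 + ‖(x, t)‖) ^ ⌈q⌉₊ :=
    calc (1 + ‖t‖) ^ q ≤ (1 + ‖t‖) ^ (⌈q⌉₊ : ℝ) :=
          Real.rpow_le_rpow_of_exponent_le (by simp) (Nat.le_ceil q)
      _ = (1 + ‖t‖) ^ ⌈q⌉₊ := Real.rpow_natCast _ _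
      _ ≤ (1 + ‖(x, t)‖) ^ ⌈q⌉₊ := by
          gcongr
          exact norm_snd_le (x, t)
  rw [Real.rpow_neg (by positivity), Real.rpow_neg (by positivity), ← mul_inv, ← div_eq_mul_inv,
    le_div_iff₀' (by positivity)]
  calc (1 + ‖x‖) ^ p * (1 + ‖t‖) ^ q * ‖iteratedFDeriv ℝ j f (x, t)‖
      ≤ (1 + ‖(x, t)‖) ^ ⌈p⌉₊ * (1 + ‖(x, t)‖) ^ ⌈q⌉₊ * ‖iteratedFDeriv ℝ j f (x, t)‖ := by gcongr
    _ = (1 + ‖(x, t)‖) ^ m.1 * ‖iteratedFDeriv ℝ j f (x, t)‖ := by rw [pow_add]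
    _ ≤ _ := SchwartzMap.one_add_le_sup_seminorm_apply le_rfl hj f (x, t)

end Slice

section Operators

variable {n : ℕ} {α s : ℝ}

lemma exists_abs_marchaudRight_le (hα0 : 0 < α) (hα1 : α < 1) :
    ∃ K, 0 ≤ K ∧ ∀ {φ : EuclideanSpace ℝ (Fin n) × ℝ → ℝ} {x : EuclideanSpace ℝ (Fin n)} {A : ℝ},
      ContDiff ℝ 1 φ → (∀ j ≤ 1, ∀ t, ‖iteratedFDeriv ℝ j φ (x, t)‖ ≤ A * (1 + |t|) ^ (-(1 + α))) →
      ∀ t, |marchaudRight α φ x t| ≤ K * A * (1 + |t|) ^ (-(1 + α)) := by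
  obtain ⟨K, hK, hint⟩ :=
    exists_abs_integral_Ioi_sub_div_rpow_le (p := 1 + α) (by linarith) (by linarith)
  refine ⟨|Calpha α| * K, by positivity, fun {φ x A} hφ hdecay t => ?_⟩
  have hslice : Differentiable ℝ fun r => φ (x, r) := by
    have := hφ.differentiable one_ne_zero
    fun_prop
  have hderiv (r : ℝ) : |deriv (fun r => φ (x, r)) r| ≤ A * (1 + |r|) ^ (-(1 + α)) := by
    rw [← Real.norm_eq_abs, norm_deriv_eq_norm_fderiv, ← norm_iteratedFDeriv_one]
    exact (norm_iteratedFDeriv_comp_prodMk_right_le hφ x r).trans (hdecay 1 le_rfl r)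
  rw [marchaudRight, abs_mul, mul_assoc, mul_assoc, ← mul_assoc K]
  gcongr
  exact hint hslice (fun r => by simpa using hdecay 0 zero_le_one r) hderiv t

lemma exists_abs_fracLap_le (hn : 1 ≤ n) (hs0 : 0 < s) (hs1 : s < 1) :
    ∃ K, 0 ≤ K ∧ ∀ {φ : EuclideanSpace ℝ (Fin n) × ℝ → ℝ} {t A : ℝ}, ContDiff ℝ 2 φ →
      (∀ x, |φ (x, t)| ≤ A * (1 + ‖x‖) ^ (-(n + 2 * s))) →
      (∀ x, ‖iteratedFDeriv ℝ 2 φ (x, t)‖ ≤ A * (1 + ‖x‖) ^ (-(n + 2 * s))) →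
      ∀ x, |fracLap s φ x t| ≤ K * A * (1 + ‖x‖) ^ (-(n + 2 * s)) := by
  have : Nonempty (Fin n) := ⟨⟨0, hn⟩⟩
  obtain ⟨K, hK, hint⟩ := exists_abs_integral_second_difference_div_norm_rpow_le
    (volume : Measure (EuclideanSpace ℝ (Fin n))) (p := n + 2 * s) (by simpa using hs0)
    (by simpa using hs1)
  refine ⟨|Cns n s / 2| * K, by positivity, fun {φ t A} hφ hφ₀ hφ₂ x => ?_⟩
  have hslice : ContDiff ℝ 2 fun y => φ (y, t) := by fun_prop
  rw [fracLap, abs_mul, mul_assoc, mul_assoc, ← mul_assoc K]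
  gcongr
  exact hint hslice hφ₀ (fun y => (norm_iteratedFDeriv_comp_prodMk_left_le hφ y t).trans (hφ₂ y)) x

theorem decay_estimate_dual_fractional_operator_general (hn : 1 ≤ n) (hα0 : 0 < α) (hα1 : α < 1)
    (hs0 : 0 < s) (hs1 : s < 1) {φ : EuclideanSpace ℝ (Fin n) × ℝ → ℝ} (hφ : ContDiff ℝ 2 φ)
    {A : ℝ} (hdecay : ∀ j ≤ 2, ∀ x t, ‖iteratedFDeriv ℝ j φ (x, t)‖ ≤
      A * ((1 + ‖x‖) ^ (-(n + 2 * s)) * (1 + |t|) ^ (-(1 + α)))) :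
    ∃ C > (0 : ℝ), ∀ (x : EuclideanSpace ℝ (Fin n)) (t : ℝ),
      |marchaudRight α φ x t + fracLap s φ x t| ≤
        C / ((1 + ‖x‖ ^ ((n : ℝ) + 2 * s)) * (1 + |t| ^ (1 + α))) := by
  obtain ⟨K₁, hK₁, hmarchaud⟩ := exists_abs_marchaudRight_le (n := n) hα0 hα1
  obtain ⟨K₂, hK₂, hfracLap⟩ := exists_abs_fracLap_le hn hs0 hs1
  have hA : 0 ≤ A := nonneg_of_mul_nonneg_left
    ((norm_nonneg _).trans (hdecay 0 zero_le_two 0 0)) (by positivity)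
  refine ⟨4 * ((K₁ + K₂) * A) + 1, by positivity, fun x t => ?_⟩
  set X := (1 + ‖x‖) ^ (-(n + 2 * s))
  set T := (1 + |t|) ^ (-(1 + α)) with hT
  have hM : |marchaudRight α φ x t| ≤ K₁ * (A * X) * T :=
    hmarchaud (hφ.of_le one_le_two)
      (fun j hj r => by simpa only [mul_assoc] using hdecay j (hj.trans one_le_two) x r) t
  have hφ₀ (y : EuclideanSpace ℝ (Fin n)) :
      |φ (y, t)| ≤ A * T * (1 + ‖y‖) ^ (-(n + 2 * s)) := by
    simpa only [norm_iteratedFDeriv_zero, Real.norm_eq_abs, hT, mul_assoc, mul_comm, mul_left_comm]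
      using hdecay 0 zero_le_two y t
  have hL : |fracLap s φ x t| ≤ K₂ * (A * T) * X :=
    hfracLap hφ hφ₀ (fun y => (hdecay 2 le_rfl y t).trans_eq (by ring)) x
  calc |marchaudRight α φ x t + fracLap s φ x t|
      ≤ |marchaudRight α φ x t| + |fracLap s φ x t| := abs_add_le _ _
    _ ≤ K₁ * (A * X) * T + K₂ * (A * T) * X := add_le_add hM hL
    _ = (K₁ + K₂) * A * (X * T) := by ring
    _ ≤ (K₁ + K₂) * A * (2 / (1 + ‖x‖ ^ (n + 2 * s)) * (2 / (1 + |t| ^ (1 + α)))) := by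
      gcongr
      · exact one_add_rpow_neg_le_two_div_one_add_rpow (norm_nonneg x) (by positivity)
      · exact one_add_rpow_neg_le_two_div_one_add_rpow (abs_nonneg t) (by positivity)
    _ = 4 * ((K₁ + K₂) * A) / ((1 + ‖x‖ ^ (n + 2 * s)) * (1 + |t| ^ (1 + α))) := by
      rw [div_mul_div_comm, ← mul_div_assoc]
      ring
    _ ≤ _ := by
      gcongr
      linarith

end Operators

/-- sharp decay estimate for `[D_right^α + (-Δ)^s]φ` when `φ` is Schwartz:
`|D_right^α φ(x,t) + (-Δ)^s φ(x,t)| ≤ C / ((1+|x|^{n+2s})(1+|t|^{1+α}))`. -/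
theorem decay_estimate_dual_fractional_operator
    (n : ℕ) (hn : 1 ≤ n) (α s : ℝ) (hα0 : 0 < α) (hα1 : α < 1)
    (hs0 : 0 < s) (hs1 : s < 1)
    (φ : SchwartzMap (EuclideanSpace ℝ (Fin n) × ℝ) ℝ) :
    ∃ C > (0 : ℝ), ∀ (x : EuclideanSpace ℝ (Fin n)) (t : ℝ),
      |marchaudRight α (⇑φ) x t + fracLap s (⇑φ) x t| ≤
        C / ((1 + ‖x‖ ^ ((n : ℝ) + 2 * s)) * (1 + |t| ^ (1 + α))) := by
  obtain ⟨A, hA⟩ := exists_norm_iteratedFDeriv_schwartzMap_prod_le φ 2 (n + 2 * s) (1 + α)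
  exact decay_estimate_dual_fractional_operator_general hn hα0 hα1 hs0 hs1 (φ.smooth 2) hA
end

section
/- Let n ≥ 1 and 0 < α, s < 1. Let η : ℝⁿ → ℝ be a smooth function with −1 ≤ η ≤ 0, η ≡ −1 on the closed unit ball B₁(0), and η ≡ 0 outside the open ball B₂(0); let φ : ℝ → ℝ be a smooth compactly supported function with 0 ≤ φ ≤ 1, φ ≡ 1 on [−1,1], and φ ≡ 0 outside (−2,2). Set ψ(x,t) = η(x)φ(t). Then there do NOT exist constants C₁ > 0 and δ₁ > 0 such that |D_right^α ψ(x,t) + (-Δ)^s ψ(x,t)| ≤ C₁ / ((1+|x|^{n+2s+δ₁})(1+|t|^{1+α})) for all (x,t) ∈ ℝⁿ×ℝ. In other words, the spatial decay exponent n+2s in the estimate |[D_right^α + (-Δ)^s]ψ(x,t)| ≤ C/((1+|x|^{n+2s})(1+|t|^{1+α})) is optimal. -/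
open MeasureTheory Set

/-!
For `x` far from the spatial support of `ψ` the Marchaud term vanishes and the fractional Laplacian
is the convolution `-C_{n,s} ∫ ψ (z, t) / ‖x - z‖ ^ (n + 2 s) dz`. Since `‖x‖ / ‖x - z‖ → 1` as
`‖x‖ → ∞`, boundedly for `z` in a bounded set, dominated convergence shows that
`‖x‖ ^ (n + 2 s)` times the operator tends to `-C_{n,s} ∫ ψ (z, t) dz`. For `ψ = η φ` and `t = 0`
this limit is positive, so no faster decay is possible.
-/

open Bornology Filter Topology

lemma rpow_le_rpow_abs_of_inv_le {a b : ℝ} (ha : 0 < a) (hab : b⁻¹ ≤ a) (hba : a ≤ b) (p : ℝ) :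
    a ^ p ≤ b ^ |p| := by
  have hb : 0 < b := ha.trans_le hba
  rcases le_total 0 p with hp | hp
  · rw [abs_of_nonneg hp]
    exact Real.rpow_le_rpow ha.le hba hp
  · rw [abs_of_nonpos hp, Real.rpow_neg hb.le, ← Real.inv_rpow hb.le]
    exact Real.rpow_le_rpow_of_nonpos (inv_pos.mpr hb) hab hp

section RieszKernel

variable {E F : Type*} [NormedAddCommGroup E] [NormedAddCommGroup F] [NormedSpace ℝ F]

lemma norm_div_norm_sub_rpow_le {x z : E} (hz : 2 * ‖z‖ ≤ ‖x‖) (p : ℝ) :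
    (‖x‖ / ‖x - z‖) ^ p ≤ 2 ^ |p| := by
  rcases (norm_nonneg x).eq_or_lt with hx | hx
  · rw [← hx, zero_div]
    exact (Real.zero_rpow_le_one p).trans (Real.one_le_rpow one_le_two (abs_nonneg p))
  · have hlower : ‖x‖ - ‖z‖ ≤ ‖x - z‖ := norm_sub_norm_le x z
    have hupper : ‖x - z‖ ≤ ‖x‖ + ‖z‖ := norm_sub_le x z
    have hpos : 0 < ‖x - z‖ := by linarith
    refine rpow_le_rpow_abs_of_inv_le (by positivity) ?_ ?_ p
    · rw [le_div_iff₀ hpos]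
      linarith
    · rw [div_le_iff₀ hpos]
      linarith

lemma tendsto_norm_div_norm_sub_cobounded (z : E) :
    Tendsto (fun x => ‖x‖ / ‖x - z‖) (cobounded E) (𝓝 1) := by
  have hnorm : Tendsto (fun x => ‖x - z‖) (cobounded E) atTop :=
    tendsto_norm_cobounded_atTop.comp (tendsto_sub_const_cobounded z)
  rw [tendsto_iff_dist_tendsto_zero]
  refine squeeze_zero' (.of_forall fun _ => dist_nonneg) ?_ (hnorm.const_div_atTop ‖z‖)
  filter_upwards [hnorm.eventually_gt_atTop 0] with x hx
  have hdiff : |‖x‖ - ‖x - z‖| ≤ ‖z‖ := by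
    simpa only [sub_sub_cancel] using abs_norm_sub_norm_le x (x - z)
  rw [Real.dist_eq, div_sub_one hx.ne', abs_div, abs_norm]
  gcongr

lemma norm_div_norm_sub_rpow_smul_le {f : E → F} {r : ℝ} (hfr : ∀ z, r ≤ ‖z‖ → f z = 0)
    {x : E} (hx : 2 * r ≤ ‖x‖) (p : ℝ) (z : E) :
    ‖(‖x‖ / ‖x - z‖) ^ p • f z‖ ≤ 2 ^ |p| * ‖f z‖ := by
  rcases le_or_gt r ‖z‖ with hz | hz
  · simp only [hfr z hz, smul_zero, norm_zero, mul_zero, le_refl]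
  · rw [norm_smul, Real.norm_of_nonneg (by positivity)]
    gcongr
    exact norm_div_norm_sub_rpow_le (by linarith) p

variable [MeasurableSpace E] [OpensMeasurableSpace E] [MeasurableSub E] {μ : Measure E}

lemma aestronglyMeasurable_norm_div_norm_sub_rpow_smul {f : E → F} (hf : AEStronglyMeasurable f μ)
    (x : E) (p : ℝ) :
    AEStronglyMeasurable (fun z => (‖x‖ / ‖x - z‖) ^ p • f z) μ :=
  (((measurable_const_sub x).norm.const_div ‖x‖).pow_const p).aestronglyMeasurable.smul hf

lemma integrable_norm_div_norm_sub_rpow_smul {f : E → F} (hf : Integrable f μ) {r : ℝ}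
    (hfr : ∀ z, r ≤ ‖z‖ → f z = 0) {x : E} (hx : 2 * r ≤ ‖x‖) (p : ℝ) :
    Integrable (fun z => (‖x‖ / ‖x - z‖) ^ p • f z) μ :=
  (hf.norm.const_mul (2 ^ |p|)).mono' (aestronglyMeasurable_norm_div_norm_sub_rpow_smul hf.1 x p)
    (.of_forall (norm_div_norm_sub_rpow_smul_le hfr hx p))

theorem tendsto_integral_norm_div_norm_sub_rpow_smul {f : E → F} (hf : Integrable f μ) {r : ℝ}
    (hfr : ∀ z, r ≤ ‖z‖ → f z = 0) (p : ℝ) :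
    Tendsto (fun x => ∫ z, (‖x‖ / ‖x - z‖) ^ p • f z ∂μ) (cobounded E) (𝓝 (∫ z, f z ∂μ)) := by
  have : (cobounded E).IsCountablyGenerated := by
    rw [← comap_norm_atTop]
    infer_instance
  refine tendsto_integral_filter_of_dominated_convergence (fun z => 2 ^ |p| * ‖f z‖)
    (.of_forall fun x => aestronglyMeasurable_norm_div_norm_sub_rpow_smul hf.1 x p) ?_
    (hf.norm.const_mul _) (.of_forall fun z => ?_)
  · filter_upwards [tendsto_norm_cobounded_atTop.eventually_ge_atTop (2 * r)] with x hx
    exact .of_forall (norm_div_norm_sub_rpow_smul_le hfr hx p)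
  · have hpow := (tendsto_norm_div_norm_sub_cobounded z).rpow_const (p := p) (.inl one_ne_zero)
    simpa only [Real.one_rpow, one_smul] using hpow.smul_const (f z)

end RieszKernel

lemma integral_even_smul_second_difference {G F : Type*} [AddCommGroup G] [MeasurableSpace G]
    [MeasurableAdd G] [MeasurableNeg G] {μ : Measure G} [μ.IsAddLeftInvariant] [μ.IsNegInvariant]
    [NormedAddCommGroup F] [NormedSpace ℝ F] {K : G → ℝ} (hK : K.Even) {f : G → F}
    {x : G} (hfx : f x = 0) (hint : Integrable (fun z => K (x - z) • f z) μ) :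
    ∫ y, K y • ((2 : ℝ) • f x - f (x + y) - f (x - y)) ∂μ =
      (-2 : ℝ) • ∫ z, K (x - z) • f z ∂μ := by
  set g : G → F := fun z => K (x - z) • f z with hg
  have hsplit (y : G) : K y • ((2 : ℝ) • f x - f (x + y) - f (x - y)) =
      -g (x + y) - g (x - y) := by
    simp only [hg, hfx, sub_add_cancel_left, sub_sub_cancel, hK y, smul_zero, zero_sub, smul_sub,
      smul_neg]
  calc ∫ y, K y • ((2 : ℝ) • f x - f (x + y) - f (x - y)) ∂μ
      = ∫ y, (-g (x + y) - g (x - y)) ∂μ := by simp only [hsplit]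
    _ = -(∫ y, g (x + y) ∂μ) - ∫ y, g (x - y) ∂μ := by
      have hadd : Integrable (fun y => g (x + y)) μ := hint.comp_add_left x
      rw [integral_sub hadd.fun_neg (hint.comp_sub_left x), integral_neg]
    _ = -(∫ z, g z ∂μ) - ∫ z, g z ∂μ := by
      rw [integral_add_left_eq_self, integral_sub_left_eq_self]
    _ = (-2 : ℝ) • ∫ z, g z ∂μ := by module

lemma integral_neg_of_nonpos_of_eq_zero_of_le_norm {E : Type*} [NormedAddCommGroup E]
    [ProperSpace E] [MeasurableSpace E] [OpensMeasurableSpace E] {μ : Measure E}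
    [IsFiniteMeasureOnCompacts μ] [μ.IsOpenPosMeasure] {f : E → ℝ} (hf : Continuous f)
    (hnonpos : ∀ x, f x ≤ 0) {r : ℝ} (hfr : ∀ x, r ≤ ‖x‖ → f x = 0) {x : E} (hx : f x ≠ 0) :
    ∫ x, f x ∂μ < 0 := by
  have hsupp : HasCompactSupport f :=
    .intro (isCompact_closedBall 0 r) fun x hx =>
      hfr x (le_of_not_ge (by simpa only [mem_closedBall_zero_iff] using hx))
  rw [← neg_pos, ← integral_neg]
  exact hf.neg.integral_pos_of_hasCompactSupport_nonneg_nonzero hsupp.neg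
    (fun x => neg_nonneg.mpr (hnonpos x)) (neg_ne_zero.mpr hx)

lemma tendsto_rpow_div_one_add_rpow_atTop (p : ℝ) {δ : ℝ} (hδ : 0 < δ) :
    Tendsto (fun R : ℝ => R ^ p / (1 + R ^ (p + δ))) atTop (𝓝 0) := by
  refine squeeze_zero' ?_ ?_ (tendsto_rpow_neg_atTop hδ)
  · filter_upwards [eventually_ge_atTop 0] with R hR
    positivity
  · filter_upwards [eventually_gt_atTop 0] with R hR
    calc R ^ p / (1 + R ^ (p + δ)) ≤ R ^ p / R ^ (p + δ) := by gcongr; linarith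
      _ = R ^ (-δ) := by rw [← Real.rpow_sub hR, sub_add_cancel_left]

lemma ne_natCast_of_mem_Ioo_zero_one {R : Type*} [Semiring R] [LinearOrder R]
    [IsStrictOrderedRing R] {s : R} (hs : s ∈ Ioo 0 1) (m : ℕ) : s ≠ m := by
  rintro rfl
  exact (Nat.cast_pos.mp hs.1).ne' (Nat.cast_lt_one.mp hs.2)

lemma Cns_pos {n : ℕ} {s : ℝ} (hns : 0 < (n : ℝ) / 2 + s) (hs : ∀ m : ℕ, s ≠ m) :
    0 < Cns n s := by
  have hΓ : Real.Gamma (-s) ≠ 0 := Real.Gamma_ne_zero fun m => neg_injective.ne (hs m)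
  have := Real.Gamma_pos_of_pos hns
  unfold Cns
  positivity

section FarField

variable {n : ℕ} {ψ : EuclideanSpace ℝ (Fin n) × ℝ → ℝ} {r t : ℝ}

lemma marchaudRight_eq_zero (α : ℝ) {x : EuclideanSpace ℝ (Fin n)} (hx : ∀ τ, ψ (x, τ) = 0) :
    marchaudRight α ψ x t = 0 := by
  simp only [marchaudRight, hx, sub_self, zero_div, integral_zero, mul_zero]

lemma norm_rpow_mul_fracLap (s : ℝ) (hint : Integrable fun z => ψ (z, t))
    (hψ : ∀ z, r ≤ ‖z‖ → ψ (z, t) = 0) {x : EuclideanSpace ℝ (Fin n)} (hx : 2 * r ≤ ‖x‖) :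
    ‖x‖ ^ ((n : ℝ) + 2 * s) * fracLap s ψ x t =
      -Cns n s * ∫ z, (‖x‖ / ‖x - z‖) ^ ((n : ℝ) + 2 * s) • ψ (z, t) := by
  set p := (n : ℝ) + 2 * s
  have hfold := integral_even_smul_second_difference (K := fun y => (‖x‖ / ‖y‖) ^ p)
    (f := fun z => ψ (z, t)) (fun y => by simp only [norm_neg])
    (hψ x (by linarith [norm_nonneg x])) (integrable_norm_div_norm_sub_rpow_smul hint hψ hx p)
  have hpull : ‖x‖ ^ p * ∫ y, (2 * ψ (x, t) - ψ (x + y, t) - ψ (x - y, t)) / ‖y‖ ^ p =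
      ∫ y, (‖x‖ / ‖y‖) ^ p • ((2 : ℝ) • ψ (x, t) - ψ (x + y, t) - ψ (x - y, t)) := by
    rw [← integral_const_mul]
    congr with y
    rw [Real.div_rpow (norm_nonneg x) (norm_nonneg y), smul_eq_mul, smul_eq_mul]
    ring
  rw [fracLap, mul_left_comm, hpull, hfold, smul_eq_mul]
  ring

theorem tendsto_norm_rpow_mul_fracLap (s : ℝ) (hint : Integrable fun z => ψ (z, t))
    (hψ : ∀ z, r ≤ ‖z‖ → ψ (z, t) = 0) :
    Tendsto (fun x => ‖x‖ ^ ((n : ℝ) + 2 * s) * fracLap s ψ x t)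
      (cobounded (EuclideanSpace ℝ (Fin n))) (𝓝 (-Cns n s * ∫ z, ψ (z, t))) := by
  refine ((tendsto_integral_norm_div_norm_sub_rpow_smul hint hψ ((n : ℝ) + 2 * s)).const_mul
    (-Cns n s)).congr' ?_
  filter_upwards [tendsto_norm_cobounded_atTop.eventually_ge_atTop (2 * r)] with x hx
  exact (norm_rpow_mul_fracLap s hint hψ hx).symm

theorem tendsto_norm_rpow_mul_marchaudRight_add_fracLap (α s : ℝ)
    (hint : Integrable fun z => ψ (z, t)) (hψ : ∀ z τ, r ≤ ‖z‖ → ψ (z, τ) = 0) :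
    Tendsto (fun x => ‖x‖ ^ ((n : ℝ) + 2 * s) * (marchaudRight α ψ x t + fracLap s ψ x t))
      (cobounded (EuclideanSpace ℝ (Fin n))) (𝓝 (-Cns n s * ∫ z, ψ (z, t))) := by
  refine (tendsto_norm_rpow_mul_fracLap s hint fun z => hψ z t).congr' ?_
  filter_upwards [tendsto_norm_cobounded_atTop.eventually_ge_atTop r] with x hx
  rw [marchaudRight_eq_zero α fun τ => hψ x τ hx, zero_add]

end FarField

theorem optimality_of_spatial_decay_general {n : ℕ} (hn : 1 ≤ n) (α : ℝ) {s : ℝ}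
    (hs : Cns n s ≠ 0) {ψ : EuclideanSpace ℝ (Fin n) × ℝ → ℝ} {r t₀ : ℝ}
    (hψ : ∀ x t, r ≤ ‖x‖ → ψ (x, t) = 0) (hmean : ∫ x, ψ (x, t₀) ≠ 0) :
    ¬ ∃ C δ : ℝ, 0 < δ ∧ ∀ x t, |marchaudRight α ψ x t + fracLap s ψ x t| ≤
      C / ((1 + ‖x‖ ^ ((n : ℝ) + 2 * s + δ)) * (1 + |t| ^ (1 + α))) := by
  rintro ⟨C, δ, hδ, hbound⟩
  have : Nonempty (Fin n) := ⟨⟨0, hn⟩⟩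
  set p := (n : ℝ) + 2 * s
  have hlim := (tendsto_norm_rpow_mul_marchaudRight_add_fracLap α s
    (.of_integral_ne_zero hmean) hψ).abs
  have hzero : Tendsto (fun x : EuclideanSpace ℝ (Fin n) =>
      C / (1 + |t₀| ^ (1 + α)) * (‖x‖ ^ p / (1 + ‖x‖ ^ (p + δ)))) (cobounded _) (𝓝 0) := by
    simpa only [mul_zero, Function.comp_apply] using
      ((tendsto_rpow_div_one_add_rpow_atTop p hδ).comp tendsto_norm_cobounded_atTop).const_mul
        (C / (1 + |t₀| ^ (1 + α)))
  have hle : |-Cns n s * ∫ x, ψ (x, t₀)| ≤ 0 := by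
    refine le_of_tendsto_of_tendsto' hlim hzero fun x => ?_
    calc |‖x‖ ^ p * (marchaudRight α ψ x t₀ + fracLap s ψ x t₀)|
        = ‖x‖ ^ p * |marchaudRight α ψ x t₀ + fracLap s ψ x t₀| := by
          rw [abs_mul, abs_of_nonneg (by positivity)]
      _ ≤ ‖x‖ ^ p * (C / ((1 + ‖x‖ ^ (p + δ)) * (1 + |t₀| ^ (1 + α)))) := by
          gcongr
          exact hbound x t₀
      _ = C / (1 + |t₀| ^ (1 + α)) * (‖x‖ ^ p / (1 + ‖x‖ ^ (p + δ))) := by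
          field_simp
  exact mul_ne_zero (neg_ne_zero.mpr hs) hmean (abs_nonpos_iff.mp hle)

/-- optimality of the spatial decay exponent `n+2s`:
for the test function `ψ(x,t) = η(x)φ(t)` built from the cutoffs `η` and `φ`, there are
no constants `C₁ > 0`, `δ₁ > 0` with
`|[D_right^α + (-Δ)^s]ψ(x,t)| ≤ C₁/((1+|x|^{n+2s+δ₁})(1+|t|^{1+α}))` on all of `ℝⁿ × ℝ`. -/
theorem optimality_of_spatial_decay
    (n : ℕ) (hn : 1 ≤ n) (α s : ℝ) (hα0 : 0 < α) (hα1 : α < 1)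
    (hs0 : 0 < s) (hs1 : s < 1)
    (η : EuclideanSpace ℝ (Fin n) → ℝ) (φ : ℝ → ℝ)
    (hη_smooth : ContDiff ℝ (⊤ : ℕ∞) η) (hη_range : ∀ x, -1 ≤ η x ∧ η x ≤ 0)
    (hη_ball : ∀ x, ‖x‖ ≤ 1 → η x = -1) (hη_out : ∀ x, 2 ≤ ‖x‖ → η x = 0)
    (hφ_smooth : ContDiff ℝ (⊤ : ℕ∞) φ) (hφ_supp : HasCompactSupport φ)
    (hφ_range : ∀ t, 0 ≤ φ t ∧ φ t ≤ 1)
    (hφ_one : ∀ t ∈ Icc (-1 : ℝ) 1, φ t = 1) (hφ_out : ∀ t : ℝ, 2 ≤ |t| → φ t = 0) :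
    ¬ ∃ (C₁ : ℝ) (δ₁ : ℝ), 0 < C₁ ∧ 0 < δ₁ ∧
      ∀ (x : EuclideanSpace ℝ (Fin n)) (t : ℝ),
        |marchaudRight α (fun p => η p.1 * φ p.2) x t +
          fracLap s (fun p => η p.1 * φ p.2) x t| ≤
            C₁ / ((1 + ‖x‖ ^ ((n : ℝ) + 2 * s + δ₁)) * (1 + |t| ^ (1 + α))) := by
  rintro ⟨C₁, δ₁, -, hδ₁, hbound⟩
  have hCns : 0 < Cns n s := Cns_pos (by positivity) (ne_natCast_of_mem_Ioo_zero_one ⟨hs0, hs1⟩)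
  have hη_mean : ∫ x, η x < 0 := integral_neg_of_nonpos_of_eq_zero_of_le_norm
    hη_smooth.continuous (fun x => (hη_range x).2) hη_out (x := 0) (by simp [hη_ball])
  exact optimality_of_spatial_decay_general hn α hCns.ne' (ψ := fun p => η p.1 * φ p.2) (t₀ := 0)
    (fun x t hx => by rw [hη_out x hx, zero_mul]) (by simpa [hφ_one] using hη_mean.ne)
    ⟨C₁, δ₁, hδ₁, hbound⟩
end

section
/- Let 0 < α < 1 and let λ > 0 be a real number. Then λ^α = (1/Γ(−α)) ∫_0^∞ (e^{−tλ} − 1) t^{−1−α} dt, where Γ is the Gamma function and the integral converges absolutely. -/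
open MeasureTheory Set

/-!
On the strip `-1 < re s < 0` the divergent Euler integral for `Γ(s)` is repaired by subtracting
from `e^{-tl}` its value at `t = 0`. Integrating by parts, i.e. using that the Mellin transforms of
`f` and `f'` satisfy `ℳ f' (s + 1) = -s ℳ f s`, removes the subtracted constant and leaves the
convergent Euler integral at `s + 1`; the functional equation of `Γ` moves the result back to `s`.
The formula is the case `s = -α`.
-/

open Asymptotics Complex Filter Topology

section MellinDeriv

variable {E : Type*} [NormedAddCommGroup E]

lemma integral_Ioi_of_hasDerivAt_of_tendsto_nhdsGT [NormedSpace ℝ E] [CompleteSpace E]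
    {f f' : ℝ → E} {a : ℝ} {m n : E} (hf : ∀ t ∈ Ioi a, HasDerivAt f (f' t) t)
    (hf' : IntegrableOn f' (Ioi a)) (h_bot : Tendsto f (𝓝[>] a) (𝓝 m))
    (h_top : Tendsto f atTop (𝓝 n)) : ∫ t in Ioi a, f' t = n - m := by
  have update_eq {t : ℝ} (ht : t ≠ a) : Function.update f a m =ᶠ[𝓝 t] f := by
    filter_upwards [eventually_ne_nhds ht] with u hu using Function.update_of_ne hu m f
  have hcont : ContinuousWithinAt (Function.update f a m) (Ici a) a := by
    rwa [continuousWithinAt_update_same, Ici_sdiff_left]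
  have htop : Tendsto (Function.update f a m) atTop (𝓝 n) := h_top.congr' <| by
    filter_upwards [eventually_ne_atTop a] with u hu using (Function.update_of_ne hu m f).symm
  simpa using integral_Ioi_of_hasDerivAt_of_tendsto hcont
    (fun t ht ↦ (hf t ht).congr_of_eventuallyEq (update_eq (ne_of_gt ht))) hf' htop

lemma isBigO_cpow_smul_rpow [NormedSpace ℂ E] {l : Filter ℝ} (hl : ∀ᶠ t in l, 0 < t)
    {f : ℝ → E} {a : ℝ} (hf : f =O[l] (· ^ (-a))) (s : ℂ) :
    (fun t : ℝ ↦ (t : ℂ) ^ s • f t) =O[l] (· ^ (s.re - a)) := by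
  have hcpow : (fun t : ℝ ↦ (t : ℂ) ^ s) =O[l] (· ^ s.re) := IsBigO.of_norm_eventuallyLE <| by
    filter_upwards [hl] with t ht using (norm_cpow_eq_rpow_re_of_pos ht s).le
  refine (hcpow.smul hf).congr' .rfl ?_
  filter_upwards [hl] with t ht
  rw [smul_eq_mul, ← Real.rpow_add ht, sub_eq_add_neg]

lemma tendsto_cpow_smul_nhdsGT_zero [NormedSpace ℂ E] {f : ℝ → E} {b : ℝ} {s : ℂ}
    (hf : f =O[𝓝[>] 0] (· ^ (-b))) (hs : b < s.re) :
    Tendsto (fun t : ℝ ↦ (t : ℂ) ^ s • f t) (𝓝[>] 0) (𝓝 0) := by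
  refine (isBigO_cpow_smul_rpow self_mem_nhdsWithin hf s).trans_tendsto ?_
  have hexp : 0 < s.re - b := sub_pos.2 hs
  have hcont := (Real.continuousAt_rpow_const 0 _ (.inr hexp.le)).tendsto
  rw [Real.zero_rpow hexp.ne'] at hcont
  exact hcont.mono_left nhdsWithin_le_nhds

lemma tendsto_cpow_smul_atTop [NormedSpace ℂ E] {f : ℝ → E} {a : ℝ} {s : ℂ}
    (hf : f =O[atTop] (· ^ (-a))) (hs : s.re < a) :
    Tendsto (fun t : ℝ ↦ (t : ℂ) ^ s • f t) atTop (𝓝 0) := by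
  refine (isBigO_cpow_smul_rpow (eventually_gt_atTop 0) hf s).trans_tendsto ?_
  simpa only [neg_sub] using tendsto_rpow_neg_atTop (sub_pos.2 hs)

lemma mellin_deriv_add_one [NormedSpace ℂ E] [CompleteSpace E] {f f' : ℝ → E} {s : ℂ}
    (hf : ∀ t ∈ Ioi 0, HasDerivAt f (f' t) t) (hfs : MellinConvergent f s)
    (hfs' : MellinConvergent f' (s + 1))
    (h_bot : Tendsto (fun t : ℝ ↦ (t : ℂ) ^ s • f t) (𝓝[>] 0) (𝓝 0))
    (h_top : Tendsto (fun t : ℝ ↦ (t : ℂ) ^ s • f t) atTop (𝓝 0)) :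
    mellin f' (s + 1) = -s • mellin f s := by
  rw [MellinConvergent, add_sub_cancel_right] at hfs'
  have hderiv : ∀ t ∈ Ioi (0 : ℝ), HasDerivAt (fun t : ℝ ↦ (t : ℂ) ^ s • f t)
      ((t : ℂ) ^ s • f' t + s • (t : ℂ) ^ (s - 1) • f t) t := fun t ht ↦ by
    have hcpow : HasDerivAt (fun t : ℝ ↦ (t : ℂ) ^ s) (s * (t : ℂ) ^ (s - 1)) t := by
      simpa using ((hasDerivAt_id (t : ℂ)).cpow_const (c := s)
        (ofReal_mem_slitPlane.2 ht)).comp_ofReal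
    simpa only [mul_smul, smul_eq_mul] using! hcpow.smul (hf t ht)
  have hint : IntegrableOn (fun t : ℝ ↦ s • (t : ℂ) ^ (s - 1) • f t) (Ioi 0) := hfs.smul s
  have hparts := integral_Ioi_of_hasDerivAt_of_tendsto_nhdsGT hderiv
    (hfs'.add hint) h_bot h_top
  rw [integral_add hfs' hint, integral_smul, sub_zero] at hparts
  rw [mellin, mellin, add_sub_cancel_right, neg_smul]
  exact eq_neg_of_add_eq_zero_left hparts

end MellinDeriv

section MellinOfReal

lemma eqOn_cpow_smul_ofReal (f : ℝ → ℝ) (s : ℝ) :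
    EqOn (fun t : ℝ ↦ (t : ℂ) ^ ((s : ℂ) - 1) • (f t : ℂ))
      (fun t : ℝ ↦ ((f t * t ^ (s - 1) : ℝ) : ℂ)) (Ioi 0) := fun t ht ↦ by
  have h0 : 0 ≤ t := le_of_lt ht
  simp only [smul_eq_mul, ofReal_mul, ofReal_cpow h0, ofReal_sub, ofReal_one, mul_comm]

variable {f : ℝ → ℝ} {s : ℝ}

lemma mellinConvergent_ofReal_iff :
    MellinConvergent (fun t ↦ (f t : ℂ)) s ↔
      IntegrableOn (fun t ↦ f t * t ^ (s - 1)) (Ioi 0) := by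
  rw [MellinConvergent, integrableOn_congr_fun (eqOn_cpow_smul_ofReal f s) measurableSet_Ioi]
  exact ⟨fun h ↦ h.re, fun h ↦ h.ofReal⟩

lemma mellin_ofReal :
    mellin (fun t ↦ (f t : ℂ)) s = ↑(∫ t in Ioi 0, f t * t ^ (s - 1)) := by
  rw [mellin, setIntegral_congr_fun measurableSet_Ioi (eqOn_cpow_smul_ofReal f s)]
  exact integral_ofReal

end MellinOfReal

section Exp

variable {s : ℂ} {l : ℝ}

lemma hasDerivAt_ofReal_exp_neg_mul_sub_one (l t : ℝ) :
    HasDerivAt (fun t : ℝ ↦ ((Real.exp (-t * l) - 1 : ℝ) : ℂ))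
      (-l * (Real.exp (-t * l) : ℝ)) t := by
  have hreal := ((((hasDerivAt_id t).neg).mul_const l).exp).sub_const 1
  refine hreal.ofReal_comp.congr_deriv ?_
  simp [mul_comm]

-- The exponents `-(-1)` and `-0` have the shape `-b`, `-a` in which Mathlib's convergence criterion
-- for the strip `b < re s < a` reads them.
lemma isBigO_exp_neg_mul_sub_one_nhdsGT_zero (l : ℝ) :
    (fun t : ℝ ↦ ((Real.exp (-t * l) - 1 : ℝ) : ℂ)) =O[𝓝[>] 0] (· ^ (-(-1 : ℝ))) := by
  simpa using (hasDerivAt_ofReal_exp_neg_mul_sub_one l 0).isBigO_sub.mono nhdsWithin_le_nhds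

lemma isBigO_exp_neg_mul_sub_one_atTop (hl : 0 < l) :
    (fun t : ℝ ↦ ((Real.exp (-t * l) - 1 : ℝ) : ℂ)) =O[atTop] (· ^ (-(0 : ℝ))) := by
  have hexp : Tendsto (fun t : ℝ ↦ Real.exp (-t * l)) atTop (𝓝 0) :=
    Real.tendsto_exp_atBot.comp (tendsto_neg_atTop_atBot.atBot_mul_const hl)
  simpa only [neg_zero, Real.rpow_zero] using
    isBigO_ofReal_left.2 ((hexp.sub_const 1).isBigO_one ℝ)

lemma hasMellin_exp_neg_mul (hs : 0 < s.re) (hl : 0 < l) :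
    HasMellin (fun t : ℝ ↦ (Real.exp (-t * l) : ℂ)) s ((l : ℂ) ^ (-s) * Gamma s) := by
  constructor
  · refine mellinConvergent_of_isBigO_rpow_exp hl (b := 0) ?_ ?_ ?_ hs
    · exact Continuous.locallyIntegrable (by fun_prop) |>.locallyIntegrableOn _
    · simpa only [neg_mul, mul_comm l] using
        isBigO_ofReal_left.2 (isBigO_refl (fun t : ℝ ↦ Real.exp (-t * l)) atTop)
    · have hcont : Continuous fun t : ℝ ↦ (Real.exp (-t * l) : ℂ) := by fun_prop
      simpa only [neg_zero, Real.rpow_zero] using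
        ((hcont.tendsto 0).mono_left nhdsWithin_le_nhds).isBigO_one ℝ
  · have harg : (l : ℂ).arg ≠ Real.pi := by
      rw [arg_ofReal_of_nonneg hl.le]
      exact Real.pi_ne_zero.symm
    rw [mellin, cpow_neg, ← inv_cpow _ _ harg, ← one_div,
      ← integral_cpow_mul_exp_neg_mul_Ioi hs hl]
    simp [mul_comm]

lemma hasMellin_exp_neg_mul_sub_one (hs : -1 < s.re) (hs' : s.re < 0) (hl : 0 < l) :
    HasMellin (fun t : ℝ ↦ ((Real.exp (-t * l) - 1 : ℝ) : ℂ)) s ((l : ℂ) ^ (-s) * Gamma s) := by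
  have h_bot := isBigO_exp_neg_mul_sub_one_nhdsGT_zero l
  have h_top := isBigO_exp_neg_mul_sub_one_atTop hl
  have hconv : MellinConvergent (fun t : ℝ ↦ ((Real.exp (-t * l) - 1 : ℝ) : ℂ)) s :=
    mellinConvergent_of_isBigO_rpow
      (Continuous.locallyIntegrable (by fun_prop) |>.locallyIntegrableOn _) h_top hs' h_bot hs
  have hs1 : 0 < (s + 1).re := by rw [add_re, one_re]; linarith
  have hs0 : s ≠ 0 := by rintro rfl; simp at hs'
  have hl0 : (l : ℂ) ≠ 0 := ofReal_ne_zero.2 hl.ne'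
  obtain ⟨hexp, hexp_eq⟩ := hasMellin_exp_neg_mul hs1 hl
  obtain ⟨hconv', hderiv_eq⟩ := hasMellin_const_smul hexp (-l : ℂ)
  have hparts := mellin_deriv_add_one (fun t _ ↦ hasDerivAt_ofReal_exp_neg_mul_sub_one l t) hconv
    hconv' (tendsto_cpow_smul_nhdsGT_zero h_bot hs) (tendsto_cpow_smul_atTop h_top hs')
  refine ⟨hconv, mul_left_cancel₀ (neg_ne_zero.2 hs0) ?_⟩
  calc -s * mellin (fun t : ℝ ↦ ((Real.exp (-t * l) - 1 : ℝ) : ℂ)) s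
      = -l * ((l : ℂ) ^ (-(s + 1)) * Gamma (s + 1)) := by
        rw [← hexp_eq]
        exact hparts.symm.trans hderiv_eq
    _ = -l * ((l : ℂ) ^ (-s) / l * (s * Gamma s)) := by
        rw [Gamma_add_one s hs0, neg_add', cpow_sub _ _ hl0, cpow_one]
    _ = -s * ((l : ℂ) ^ (-s) * Gamma s) := by field_simp

end Exp

lemma Gamma_ne_zero_of_neg_one_lt_re {s : ℂ} (hs : -1 < s.re) (hs0 : s ≠ 0) : Gamma s ≠ 0 := by
  have hs1 : 0 < (s + 1).re := by rw [add_re, one_re]; linarith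
  have h := Gamma_ne_zero_of_re_pos hs1
  rw [Gamma_add_one s hs0] at h
  exact right_ne_zero_of_mul h

theorem gamma_formula_real_power_general {α : ℂ} {l : ℝ} (hα0 : 0 < α.re) (hα1 : α.re < 1)
    (hl : 0 < l) :
    MellinConvergent (fun t : ℝ ↦ ((Real.exp (-t * l) - 1 : ℝ) : ℂ)) (-α) ∧
    (l : ℂ) ^ α = (1 / Gamma (-α)) *
      mellin (fun t : ℝ ↦ ((Real.exp (-t * l) - 1 : ℝ) : ℂ)) (-α) := by
  have hre0 : (-α).re < 0 := neg_neg_of_pos hα0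
  have hre1 : -1 < (-α).re := neg_lt_neg hα1
  have hGamma : Gamma (-α) ≠ 0 :=
    Gamma_ne_zero_of_neg_one_lt_re hre1 (ne_of_apply_ne re hre0.ne)
  obtain ⟨hconv, heq⟩ := hasMellin_exp_neg_mul_sub_one hre1 hre0 hl
  refine ⟨hconv, ?_⟩
  rw [heq, neg_neg]
  field_simp

/-- for `0 < α < 1` and `λ > 0`,
`λ^α = (1/Γ(-α)) ∫_0^∞ (e^{-tλ} - 1) t^{-1-α} dt`, the integral converging absolutely. -/
theorem gamma_formula_real_power
    (α l : ℝ) (hα0 : 0 < α) (hα1 : α < 1) (hl : 0 < l) :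
    IntegrableOn (fun t : ℝ => (Real.exp (-t * l) - 1) * t ^ (-1 - α)) (Ioi 0) ∧
    l ^ α = (1 / Real.Gamma (-α)) *
      ∫ t in Ioi (0 : ℝ), (Real.exp (-t * l) - 1) * t ^ (-1 - α) := by
  have h := gamma_formula_real_power_general (α := α) hα0 hα1 hl
  rw [← ofReal_neg, mellinConvergent_ofReal_iff, mellin_ofReal, Gamma_ofReal,
    ← ofReal_cpow hl.le, neg_sub_comm] at h
  exact_mod_cast h
end
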